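/- Suppose a is an action of a group Γ on a Polish space X by Borel automorphisms which has a paradoxical decomposition. Then there is a comeager Borel set B ⊆ X and a free action of the free group F₂ on X by Baire measurable automorphisms which is a-Lipschitz, such that B is invariant under the F₂-action and every element of F₂ acts by a Borel automorphism on B. -/

import Mathlib

open scoped Pointwise

/-- The families `A₁,…,Aₙ, B₁,…,B_m` together with group elements `α₁,…,αₙ, β₁,…,β_m` form a
paradoxical decomposition of the action of `Γ` on `X`. -/
def IsParadoxicalDecomposition {Γ X : Type*} [Group Γ] [MulAction Γ X]
    {n m : ℕ} (A : Fin n → Set X) (B : Fin m → Set X) (α : Fin n → Γ) (β : Fin m → Γ) : Prop :=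
  (∀ i j, i ≠ j → Disjoint (A i) (A j)) ∧
  (∀ i j, i ≠ j → Disjoint (B i) (B j)) ∧
  (∀ i j, Disjoint (A i) (B j)) ∧
  ((⋃ i, A i) ∪ (⋃ j, B j)) = Set.univ ∧
  (∀ i j, i ≠ j → Disjoint (α i • A i) (α j • A j)) ∧
  (∀ i j, i ≠ j → Disjoint (β i • B i) (β j • B j)) ∧
  (⋃ i, α i • A i) = Set.univ ∧
  (⋃ j, β j • B j) = Set.univ

/-- A function between topological spaces (with Borel σ-algebras) is Baire measurable if the
preimage of every Borel set has the Baire property. -/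
def BaireMeasurableFun {X Y : Type*} [TopologicalSpace X] [TopologicalSpace Y]
    [MeasurableSpace Y] (f : X → Y) : Prop :=
  ∀ s : Set Y, MeasurableSet s → BaireMeasurableSet (f ⁻¹' s)

/-!
A paradoxical decomposition yields a finite set `S` of group elements with `2 * #F ≤ #(S • F)` for
all finite `F`, and powers of `S` expand by arbitrarily large factors. By Hall's theorem there is an
injection `Φ` sending each pair of a point `x` and a letter of the free group into `S • x`. After
its cycles have been cut, this is a forest in which every vertex can be given one neighbour per
letter, and the free group acts freely by moving along the edges.

To make `Φ` measurable on a comeager set, the values of `Φ` are decided successively on sets of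
indices, the `n`-th of which is sparse on a scale growing exponentially with `n`. If a decision on
the `n`-th set keeps Hall's condition on sets meeting it at most once, then it keeps it altogether:
a connected set meeting it twice is so large that at most half of it has been decided, and the
undecided half has enough values because `S` expands by a factor two. Since every non-meagre set has
non-meagre intersection with a translate of a sparse Borel set, countably many sparse sets suffice
to decide `Φ` on a comeager invariant Borel set.
-/

open scoped Finset

section BoundedDisplacement

variable {Γ X Y Z : Type*} [Group Γ] [MulAction Γ X]

/-- Two maps into a `Γ`-space that differ pointwise by an element of a finite subset of `Γ`. An
action `b` on `X` is Lipschitz with respect to the action of `Γ` exactly if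
`BoundedDisplacement Γ (b w) id` for every `w`. -/
def BoundedDisplacement (Γ : Type*) {X Y : Type*} [SMul Γ X] (f g : Y → X) : Prop :=
  ∃ S : Finset Γ, ∀ y, ∃ γ ∈ S, f y = γ • g y

namespace BoundedDisplacement

variable {f g h : Y → X}

theorem refl (f : Y → X) : BoundedDisplacement Γ f f :=
  ⟨{1}, fun y => ⟨1, Finset.mem_singleton_self 1, (one_smul Γ (f y)).symm⟩⟩

theorem symm (hfg : BoundedDisplacement Γ f g) : BoundedDisplacement Γ g f := by
  classical
  obtain ⟨S, hS⟩ := hfg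
  refine ⟨S⁻¹, fun y => ?_⟩
  obtain ⟨γ, hγ, hy⟩ := hS y
  exact ⟨γ⁻¹, Finset.inv_mem_inv hγ, eq_inv_smul_iff.2 hy.symm⟩

theorem trans (hfg : BoundedDisplacement Γ f g) (hgh : BoundedDisplacement Γ g h) :
    BoundedDisplacement Γ f h := by
  classical
  obtain ⟨S, hS⟩ := hfg
  obtain ⟨T, hT⟩ := hgh
  refine ⟨S * T, fun y => ?_⟩
  obtain ⟨γ, hγ, hf⟩ := hS y
  obtain ⟨δ, hδ, hg⟩ := hT y
  exact ⟨γ * δ, Finset.mul_mem_mul hγ hδ, by rw [hf, hg, mul_smul]⟩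

theorem comp (hfg : BoundedDisplacement Γ f g) (k : Z → Y) :
    BoundedDisplacement Γ (f ∘ k) (g ∘ k) := by
  obtain ⟨S, hS⟩ := hfg
  exact ⟨S, fun z => hS (k z)⟩

end BoundedDisplacement

end BoundedDisplacement

section Freeness

variable {α Y : Type*}

/-- The letter of the free group over `α` inverse to `l`. -/
def letterInv (l : α × Bool) : α × Bool := (l.1, !l.2)

@[simp]
theorem letterInv_letterInv (l : α × Bool) : letterInv (letterInv l) = l := by
  simp [letterInv]

theorem ne_letterInv_of_isReduced {l l' : α × Bool} {L : List (α × Bool)}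
    (h : FreeGroup.IsReduced (l :: l' :: L)) : l' ≠ letterInv l := by
  rintro rfl
  simpa [letterInv] using (FreeGroup.isReduced_cons_cons.1 h).1

open FreeGroup (IsReduced IsCyclicallyReduced reduceCyclically)
open Relation

theorem apply_mk_cons (b : FreeGroup α →* Equiv.Perm Y) (l : α × Bool) (L : List (α × Bool))
    (p : Y) : b (FreeGroup.mk (l :: L)) p = b (FreeGroup.mk [l]) (b (FreeGroup.mk L) p) := by
  rw [← Equiv.Perm.mul_apply, ← map_mul, FreeGroup.mul_mk, List.singleton_append]

/-- A certificate of freeness: every point `p` is labelled by the letter that leads to it from its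
parent, `Below q p` says that `q` is a child of `p`, a letter not inverse to the label moves `p` to
a child, and the inverse letter moves `p` to its parent, except that it interchanges the roots of
the forest. -/
structure IsForestAction (b : FreeGroup α →* Equiv.Perm Y) (label : Y → α × Bool)
    (Below : Y → Y → Prop) : Prop where
  descend : ∀ l p, label p ≠ letterInv l →
    Below (b (FreeGroup.mk [l]) p) p ∧ label (b (FreeGroup.mk [l]) p) = l
  ascend : ∀ l p, label p = letterInv l →
    Below p (b (FreeGroup.mk [l]) p) ∨ label (b (FreeGroup.mk [l]) p) = l
  acyclic : ∀ p, ¬ TransGen Below p p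

namespace IsForestAction

variable {b : FreeGroup α →* Equiv.Perm Y} {label : Y → α × Bool} {Below : Y → Y → Prop}

theorem transGen_of_label_eq (h : IsForestAction b label Below) {l l₀ : α × Bool}
    {L : List (α × Bool)} (hL : IsReduced (l :: L ++ [l₀])) {p : Y} (hp : label p = l₀) :
    TransGen Below (b (FreeGroup.mk (l :: L)) p) p ∧ label (b (FreeGroup.mk (l :: L)) p) = l := by
  induction L generalizing l with
  | nil =>
    obtain ⟨hbelow, hlabel⟩ := h.descend l p (hp ▸ ne_letterInv_of_isReduced hL)
    exact ⟨.single hbelow, hlabel⟩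
  | cons l' L ih =>
    obtain ⟨hbelow, hlabel⟩ := ih (hL.infix (List.suffix_cons _ _).isInfix)
    rw [apply_mk_cons]
    obtain ⟨hbelow', hlabel'⟩ := h.descend l (b (FreeGroup.mk (l' :: L)) p) <| by
      rw [hlabel]
      exact ne_letterInv_of_isReduced hL
    exact ⟨hbelow.head hbelow', hlabel'⟩

theorem transGen_or_label_eq (h : IsForestAction b label Below) {l : α × Bool}
    {L : List (α × Bool)} (hL : IsReduced (l :: L)) (p : Y) :
    TransGen Below p (b (FreeGroup.mk (l :: L)) p) ∨ label (b (FreeGroup.mk (l :: L)) p) = l := by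
  induction L generalizing l with
  | nil =>
    by_cases hp : label p = letterInv l
    · exact (h.ascend l p hp).imp_left .single
    · exact .inr (h.descend l p hp).2
  | cons l' L ih =>
    rw [apply_mk_cons]
    by_cases hlabel : label (b (FreeGroup.mk (l' :: L)) p) = letterInv l
    · have hbelow : TransGen Below p (b (FreeGroup.mk (l' :: L)) p) :=
        (ih (hL.infix (List.suffix_cons _ _).isInfix)).resolve_right fun h' =>
          ne_letterInv_of_isReduced hL (h'.symm.trans hlabel)
      exact (h.ascend l _ hlabel).imp_left hbelow.tail
    · exact .inr (h.descend l _ hlabel).2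

theorem apply_ne_of_isCyclicallyReduced (h : IsForestAction b label Below) {L : List (α × Bool)}
    (hL : IsCyclicallyReduced L) (hne : L ≠ []) (p : Y) : b (FreeGroup.mk L) p ≠ p := by
  intro hp
  obtain ⟨l, L, rfl⟩ := List.exists_cons_of_ne_nil hne
  have hlabel : label p = l := by
    have := h.transGen_or_label_eq hL.isReduced p
    rw [hp] at this
    exact this.resolve_left (h.acyclic p)
  have hred : IsReduced (l :: L ++ [l]) :=
    (hL.flatten_replicate 2).isReduced.infix ⟨[], L, by simp [List.replicate]⟩
  have hbelow := (h.transGen_of_label_eq hred hlabel).1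
  rw [hp] at hbelow
  exact h.acyclic p hbelow

/-- After conjugating, the word is cyclically reduced. If it fixes `p`, then `p` carries the first
letter of the word as its label, so that reading the word again only moves down the forest. -/
theorem apply_ne (h : IsForestAction b label Below) {w : FreeGroup α} (hw : w ≠ 1) (p : Y) :
    b w p ≠ p := by
  classical
  intro hp
  set c := FreeGroup.mk (reduceCyclically.conjugator w.toWord)
  set L := reduceCyclically w.toWord
  have hconj : w = c * FreeGroup.mk L * c⁻¹ := by
    rw [FreeGroup.inv_mk, FreeGroup.mul_mk, FreeGroup.mul_mk,
      reduceCyclically.conj_conjugator_reduceCyclically, FreeGroup.mk_toWord]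
  have hL : L ≠ [] := by
    intro hL
    exact hw (by rw [hconj, hL, ← FreeGroup.one_eq_mk, mul_one, mul_inv_cancel])
  refine h.apply_ne_of_isCyclicallyReduced
    (reduceCyclically.isCyclicallyReduced FreeGroup.isReduced_toWord) hL (b c⁻¹ p) ?_
  rw [hconj, mul_assoc, map_mul, map_mul, Equiv.Perm.mul_apply, Equiv.Perm.mul_apply] at hp
  rw [map_inv] at hp ⊢
  rw [Equiv.Perm.eq_inv_iff_eq, hp]

end IsForestAction

end Freeness

section ForestAction

open Function Relation

open scoped Classical in
/-- The letter `l` acting on `X × (α × Bool)`, where a point `(x, t)` stands for the copy of `x`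
reached by the letter `t`, and `Φ (x, i)` is the child of `x` in slot `i`. Since the letter inverse
to `t` leads back to the parent, only the slots different from a dead slot `J x` are used. -/
noncomputable def forestStep {α X : Type*} (Φ : X × (α × Bool) → X) (J : X → α × Bool)
    (l : α × Bool) (p : X × (α × Bool)) : X × (α × Bool) :=
  if p.2 = letterInv l then
    extend (fun q : {q : X × (α × Bool) // q.2 ≠ J q.1} => Φ q)
      (fun q => (q.1.1, Equiv.swap l (J q.1.1) q.1.2)) (fun x => (x, l)) p.1
  else (Φ (p.1, Equiv.swap (letterInv l) (J p.1) p.2), l)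

variable {α X : Type*} {Φ : X × (α × Bool) → X} {J : X → α × Bool}

open scoped Classical in
theorem forestStep_of_ne (Φ : X × (α × Bool) → X) (J : X → α × Bool) {l t : α × Bool}
    (h : t ≠ letterInv l) (x : X) :
    forestStep Φ J l (x, t) = (Φ (x, Equiv.swap (letterInv l) (J x) t), l) :=
  if_neg h

open scoped Classical in
theorem forestStep_of_live (hΦ : Injective Φ) {l t : α × Bool} (ht : t = letterInv l) {x : X}
    {i : α × Bool} (h : i ≠ J x) : forestStep Φ J l (Φ (x, i), t) = (x, Equiv.swap l (J x) i) :=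
  (if_pos ht).trans <|
    (hΦ.comp Subtype.val_injective).extend_apply _ _ (⟨(x, i), h⟩ : {q // q.2 ≠ J q.1})

theorem forestStep_of_root {l t : α × Bool} (ht : t = letterInv l) {x : X}
    (h : ∀ y i, i ≠ J y → Φ (y, i) ≠ x) : forestStep Φ J l (x, t) = (x, l) :=
  (if_pos ht).trans <| extend_apply' _ _ _ fun ⟨q, hq⟩ => h q.1.1 q.1.2 q.2 hq

theorem forestStep_letterInv_forestStep (hΦ : Injective Φ) (l : α × Bool)
    (p : X × (α × Bool)) : forestStep Φ J (letterInv l) (forestStep Φ J l p) = p := by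
  classical
  obtain ⟨x, t⟩ := p
  have hl : l = letterInv (letterInv l) := (letterInv_letterInv l).symm
  by_cases ht : t = letterInv l
  · by_cases hx : ∃ y i, i ≠ J y ∧ Φ (y, i) = x
    · obtain ⟨y, i, hi, rfl⟩ := hx
      have hne : Equiv.swap l (J y) i ≠ letterInv (letterInv l) := by
        rwa [← hl, Ne, Equiv.swap_apply_eq_iff, Equiv.swap_apply_left]
      rw [forestStep_of_live hΦ ht hi, forestStep_of_ne Φ J hne, ← hl, Equiv.swap_apply_self, ht]
    · push Not at hx
      rw [forestStep_of_root ht hx, forestStep_of_root hl hx, ht]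
  · have hne : Equiv.swap (letterInv l) (J x) t ≠ J x := by
      rwa [Ne, Equiv.swap_apply_eq_iff, Equiv.swap_apply_right]
    rw [forestStep_of_ne Φ J ht, forestStep_of_live hΦ hl hne, Equiv.swap_apply_self]

/-- The permutation of `X × (α × Bool)` by which a letter acts. -/
noncomputable def forestPerm (hΦ : Injective Φ) (J : X → α × Bool) (l : α × Bool) :
    Equiv.Perm (X × (α × Bool)) where
  toFun := forestStep Φ J l
  invFun := forestStep Φ J (letterInv l)
  left_inv := forestStep_letterInv_forestStep hΦ l
  right_inv p := by
    simpa only [letterInv_letterInv] using forestStep_letterInv_forestStep hΦ (letterInv l) p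

/-- The action of the free group on `X × (α × Bool)` extending that of the letters. -/
noncomputable def forestAction (hΦ : Injective Φ) (J : X → α × Bool) :
    FreeGroup α →* Equiv.Perm (X × (α × Bool)) :=
  FreeGroup.lift fun a => forestPerm hΦ J (a, true)

theorem forestAction_mk_singleton (hΦ : Injective Φ) (J : X → α × Bool) (l : α × Bool) :
    ⇑(forestAction hΦ J (FreeGroup.mk [l])) = forestStep Φ J l := by
  obtain ⟨a, _ | _⟩ := l <;> simp [forestAction] <;> rfl

theorem forestAction_induction (hΦ : Injective Φ) (J : X → α × Bool)
    {P : (X × (α × Bool) → X × (α × Bool)) → Prop} (hid : P id)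
    (hcomp : ∀ f g, P f → P g → P (f ∘ g)) (hstep : ∀ l, P (forestStep Φ J l))
    (w : FreeGroup α) : P (forestAction hΦ J w) := by
  refine FreeGroup.induction_on w ?_ (fun a => ?_) (fun a _ => ?_) fun v w hv hw => ?_
  · rwa [map_one]
  · exact forestAction_mk_singleton hΦ J (a, true) ▸ hstep (a, true)
  · exact forestAction_mk_singleton hΦ J (a, false) ▸ hstep (a, false)
  · rw [map_mul]
    exact hcomp (forestAction hΦ J v) (forestAction hΦ J w) hv hw

/-- The partial inverse of `Φ`, recovering the parent `x` from a child `Φ (x, i)`. -/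
noncomputable def parent {ι : Type*} (Φ : X × ι → X) : X → X := extend Φ Prod.fst id

theorem parent_apply {ι : Type*} {Φ : X × ι → X} (hΦ : Injective Φ) (p : X × ι) :
    parent Φ (Φ p) = p.1 :=
  hΦ.extend_apply Prod.fst id p

/-- Every cycle of `parent` is cut at each of its points, because the dead slot of a point on the
cycle is the slot containing the preceding point. -/
theorem isForestAction_forestAction (hΦ : Injective Φ)
    (hJ : ∀ p, Φ p ∈ periodicPts (parent Φ) → p.2 = J p.1) :
    IsForestAction (forestAction hΦ J) Prod.snd
      (fun q p => ∃ i, i ≠ J p.1 ∧ Φ (p.1, i) = q.1) where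
  descend := by
    classical
    rintro l ⟨x, t⟩ ht
    rw [forestAction_mk_singleton, forestStep_of_ne Φ J ht]
    exact ⟨⟨_, by rwa [Ne, Equiv.swap_apply_eq_iff, Equiv.swap_apply_right], rfl⟩, rfl⟩
  ascend := by
    rintro l ⟨x, t⟩ ht
    rw [forestAction_mk_singleton]
    by_cases hx : ∃ y i, i ≠ J y ∧ Φ (y, i) = x
    · obtain ⟨y, i, hi, rfl⟩ := hx
      rw [forestStep_of_live hΦ ht hi]
      exact .inl ⟨i, hi, rfl⟩
    · push Not at hx
      rw [forestStep_of_root ht hx]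
      exact .inr rfl
  acyclic := by
    have hiterate : ∀ q p : X × (α × Bool),
        TransGen (fun q p => ∃ i, i ≠ J p.1 ∧ Φ (p.1, i) = q.1) q p →
          ∃ n > 0, (parent Φ)^[n] q.1 = p.1 := by
      intro q p h
      induction h with
      | single h =>
        obtain ⟨i, -, hi⟩ := h
        exact ⟨1, one_pos, by rw [← hi]; exact parent_apply hΦ _⟩
      | tail _ h ih =>
        obtain ⟨n, -, hn⟩ := ih
        obtain ⟨i, -, hi⟩ := h
        exact ⟨n + 1, n.succ_pos, by rw [iterate_succ_apply', hn, ← hi, parent_apply hΦ]⟩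
    intro p hp
    obtain ⟨q, ⟨i, hi, hq⟩, -⟩ := TransGen.head'_iff.1 hp
    exact hi (hJ (q.1, i) (hq ▸ hiterate p p hp))

theorem boundedDisplacement_forestAction {Γ : Type*} [Group Γ] [MulAction Γ X]
    (hΦ : Injective Φ) (hΓ : BoundedDisplacement Γ Φ Prod.fst) (w : FreeGroup α) :
    BoundedDisplacement Γ (Prod.fst ∘ forestAction hΦ J w) Prod.fst := by
  classical
  refine forestAction_induction hΦ J (P := fun f => BoundedDisplacement Γ (Prod.fst ∘ f) Prod.fst)
    (.refl _) (fun f g hf hg => (hf.comp g).trans hg) (fun l => ?_) w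
  obtain ⟨S, hS⟩ := hΓ
  refine ⟨insert 1 (S ∪ S⁻¹), fun ⟨x, t⟩ => ?_⟩
  by_cases ht : t = letterInv l
  · by_cases hx : ∃ y i, i ≠ J y ∧ Φ (y, i) = x
    · obtain ⟨y, i, hi, rfl⟩ := hx
      obtain ⟨γ, hγ, hy⟩ := hS (y, i)
      refine ⟨γ⁻¹, by simp [hγ], ?_⟩
      rw [comp_apply, forestStep_of_live hΦ ht hi, hy, inv_smul_smul]
    · push Not at hx
      refine ⟨1, by simp, ?_⟩
      rw [comp_apply, forestStep_of_root ht hx, one_smul]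
  · obtain ⟨γ, hγ, hx⟩ := hS (x, Equiv.swap (letterInv l) (J x) t)
    refine ⟨γ, by simp [hγ], ?_⟩
    rw [comp_apply, forestStep_of_ne Φ J ht, hx]

section Measurability

variable [MeasurableSpace X] [MeasurableSpace α] [Countable α] [DiscreteMeasurableSpace α]

theorem measurable_forestStep (hΦ : MeasurableEmbedding Φ) (hJ : Measurable J) (l : α × Bool) :
    Measurable (forestStep Φ J l) := by
  classical
  have hswap : ∀ a, Measurable fun p : X × (α × Bool) => Equiv.swap a (J p.1) p.2 := fun a =>
    (measurable_of_countable fun c : (α × Bool) × (α × Bool) => Equiv.swap a c.1 c.2).comp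
      ((hJ.comp measurable_fst).prodMk measurable_snd)
  have hlive : MeasurableSet {q : X × (α × Bool) | q.2 ≠ J q.1} :=
    (measurableSet_eq_fun measurable_snd (hJ.comp measurable_fst)).compl
  refine Measurable.ite (measurableSet_eq_fun measurable_snd measurable_const) ?_ ?_
  · refine ((hΦ.comp (.subtype_coe hlive)).measurable_extend ?_ ?_).comp measurable_fst
    · exact (measurable_fst.prodMk (hswap l)).comp measurable_subtype_coe
    · exact measurable_id.prodMk measurable_const
  · exact (hΦ.measurable.comp (measurable_fst.prodMk (hswap _))).prodMk measurable_const

theorem measurable_forestAction (hΦ : MeasurableEmbedding Φ) (hJ : Measurable J)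
    (w : FreeGroup α) : Measurable (forestAction hΦ.injective J w) :=
  forestAction_induction hΦ.injective J measurable_id (fun _ _ hf hg => hf.comp hg)
    (measurable_forestStep hΦ hJ) w

end Measurability

theorem measurableSet_periodicPts [MeasurableSpace X] [MeasurableEq X] {f : X → X}
    (hf : Measurable f) : MeasurableSet (periodicPts f) := by
  have h : periodicPts f = ⋃ n ∈ Set.Ioi 0, {x | f^[n] x = x} := by
    ext x
    simp [periodicPts, IsPeriodicPt, IsFixedPt]
  rw [h]
  exact .biUnion (Set.to_countable _) fun n _ =>
    measurableSet_eq_fun (hf.iterate n) measurable_id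

theorem exists_measurable_slot_of_mem_periodicPts {ι : Type*} [MeasurableSpace X] [MeasurableEq X]
    [MeasurableSpace ι] [Countable ι] [Nonempty ι] {Φ : X × ι → X}
    (hΦ : MeasurableEmbedding Φ) :
    ∃ J : X → ι, Measurable J ∧ ∀ p, Φ p ∈ periodicPts (parent Φ) → p.2 = J p.1 := by
  have hparent : Measurable (parent Φ) := hΦ.measurable_extend measurable_fst measurable_id
  obtain ⟨J, hJ, hJ'⟩ := exists_measurable_piecewise
    (fun i => {x | Φ (x, i) ∈ periodicPts (parent Φ)})
    (fun i => hΦ.measurable.comp measurable_prodMk_right (measurableSet_periodicPts hparent))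
    (fun i _ => i) (fun i => measurable_const) (by
      rintro i j - x ⟨hi, hj⟩
      have := (bijOn_periodicPts (parent Φ)).injOn hi hj (by
        rw [parent_apply hΦ.injective, parent_apply hΦ.injective])
      exact congrArg Prod.snd (hΦ.injective this))
  exact ⟨J, hJ, fun p hp => (hJ' p.2 hp).symm⟩

end ForestAction

section SchroederBernstein

open Function

variable {α β : Type*} [MeasurableSpace α] [MeasurableSpace β]

theorem measurableSet_iUnion_iterate_image {f : α → α} (hf : MeasurableEmbedding f) {s : Set α}
    (hs : MeasurableSet s) : MeasurableSet (⋃ n, f^[n] '' s) := by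
  refine .iUnion fun n => ?_
  induction n with
  | zero => simpa using hs
  | succ n ih =>
    rw [iterate_succ', Set.image_comp]
    exact hf.measurableSet_image.2 ih

theorem exists_measurableSet_preimage_eq_image {f : α → β} {g : β → α}
    (hf : MeasurableEmbedding f) (hg : MeasurableEmbedding g) :
    ∃ A : Set α, MeasurableSet A ∧ Aᶜ ⊆ Set.range g ∧ g ⁻¹' A = f '' A := by
  refine ⟨⋃ n, (g ∘ f)^[n] '' (Set.range g)ᶜ,
    measurableSet_iUnion_iterate_image (hg.comp hf) hg.measurableSet_range.compl,
    Set.compl_subset_comm.1 (Set.subset_iUnion_of_subset 0 (by simp)), ?_⟩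
  ext b
  constructor
  · intro hb
    obtain ⟨_ | n, a, ha, hab⟩ := Set.mem_iUnion.1 hb
    · exact absurd ⟨b, hab.symm⟩ ha
    · rw [iterate_succ_apply'] at hab
      exact ⟨_, Set.mem_iUnion_of_mem n ⟨a, ha, rfl⟩, hg.injective hab⟩
  · rintro ⟨_, ha', rfl⟩
    obtain ⟨n, a, ha, rfl⟩ := Set.mem_iUnion.1 ha'
    exact Set.mem_iUnion_of_mem (n + 1) ⟨a, ha, iterate_succ_apply' _ _ _⟩

/-- The measurable version of `Function.Embedding.schroeder_bernstein_of_rel`. -/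
theorem exists_measurableEquiv_of_rel {f : α → β} {g : β → α} (hf : MeasurableEmbedding f)
    (hg : MeasurableEmbedding g) {R : α → β → Prop} (hRf : ∀ a, R a (f a))
    (hRg : ∀ b, R (g b) b) : ∃ e : α ≃ᵐ β, ∀ a, R a (e a) := by
  classical
  obtain ⟨A, hA, hAg, hgf⟩ := exists_measurableSet_preimage_eq_image hf hg
  have hf_extend : ∀ a, extend f id g (f a) = a := hf.injective.extend_apply id g
  have hg_extend : ∀ b, extend g id f (g b) = b := hg.injective.extend_apply id f
  have hgf_mem : ∀ a ∈ A, f a ∈ g ⁻¹' A := fun a ha => hgf ▸ Set.mem_image_of_mem f ha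
  let e : α ≃ᵐ β :=
    { toFun := A.piecewise f (extend g id f)
      invFun := (g ⁻¹' A).piecewise (extend f id g) g
      left_inv := fun a => by
        by_cases ha : a ∈ A
        · rw [A.piecewise_eq_of_mem _ _ ha, Set.piecewise_eq_of_mem _ _ _ (hgf_mem a ha), hf_extend]
        · obtain ⟨b, rfl⟩ := hAg ha
          rw [A.piecewise_eq_of_notMem _ _ ha, hg_extend,
            Set.piecewise_eq_of_notMem _ _ _ (by exact ha)]
      right_inv := fun b => by
        by_cases hb : b ∈ g ⁻¹' A
        · obtain ⟨a, ha, rfl⟩ := hgf.subset hb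
          rw [Set.piecewise_eq_of_mem _ _ _ hb, hf_extend, A.piecewise_eq_of_mem _ _ ha]
        · rw [Set.piecewise_eq_of_notMem _ _ _ hb, A.piecewise_eq_of_notMem _ _ hb, hg_extend]
      measurable_toFun :=
        hf.measurable.piecewise hA (hg.measurable_extend measurable_id hf.measurable)
      measurable_invFun :=
        (hf.measurable_extend measurable_id hg.measurable).piecewise (hg.measurable hA)
          hg.measurable }
  refine ⟨e, fun a => ?_⟩
  by_cases ha : a ∈ A
  · rw [show e a = f a from A.piecewise_eq_of_mem _ _ ha]
    exact hRf a
  · obtain ⟨b, rfl⟩ := hAg ha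
    rw [show e (g b) = b from (A.piecewise_eq_of_notMem _ _ ha).trans (hg_extend b)]
    exact hRg b

end SchroederBernstein

section Transfer

open MeasurableSpace

theorem measurableEq_of_countablySeparated (X : Type*) [MeasurableSpace X]
    [CountablySeparated X] : MeasurableEq X where
  measurableSet_diagonal := by
    obtain ⟨f, hf, hinj⟩ := measurable_injection_nat_bool_of_countablySeparated X
    have h : Set.diagonal X = {p : X × X | f p.1 = f p.2} :=
      Set.ext fun p => hinj.eq_iff.symm
    exact h ▸ measurableSet_eq_fun (hf.comp measurable_fst) (hf.comp measurable_snd)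

theorem exists_measurableEquiv_boundedDisplacement {Γ X ι : Type*} [Group Γ] [MulAction Γ X]
    [MeasurableSpace X] [MeasurableSpace ι] [MeasurableSingletonClass ι] [Nonempty ι]
    {Φ : X × ι → X} (hΦ : MeasurableEmbedding Φ)
    (hΓ : BoundedDisplacement Γ Φ Prod.fst) :
    ∃ θ : X × ι ≃ᵐ X, BoundedDisplacement Γ θ Prod.fst := by
  classical
  obtain ⟨S, hS⟩ := hΓ
  let o : ι := Classical.arbitrary ι
  obtain ⟨θ, hθ⟩ := exists_measurableEquiv_of_rel (g := fun y => (y, o))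
    (R := fun p y => ∃ γ ∈ insert 1 S, y = γ • p.1) hΦ (measurableEmbedding_prod_mk_right o)
    (fun p => (hS p).imp fun _ h => ⟨Finset.mem_insert_of_mem h.1, h.2⟩)
    (fun y => ⟨1, Finset.mem_insert_self 1 S, (one_smul Γ y).symm⟩)
  exact ⟨θ, insert 1 S, hθ⟩

variable {Γ X ι : Type*} [Group Γ] [MulAction Γ X] [Countable Γ] [MeasurableSpace X]
  [MeasurableConstSMul Γ X] [MeasurableEq X] [MeasurableSpace ι] [Countable ι]

theorem measurableEmbedding_of_forall_exists_smul {Φ : X × ι → X} (hΦ : Measurable Φ)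
    (hinj : Φ.Injective) (horbit : ∀ p, ∃ γ : Γ, Φ p = γ • p.1) : MeasurableEmbedding Φ where
  injective := hinj
  measurable := hΦ
  measurableSet_image' := fun s hs => by
    have himage : Φ '' s =
        ⋃ (γ : Γ) (i : ι), (fun y : X => (γ • y, i)) ⁻¹' (s ∩ {p | γ⁻¹ • p.1 = Φ p}) := by
      ext y
      simp only [Set.mem_image, Set.mem_iUnion, Set.mem_preimage, Set.mem_inter_iff,
        Set.mem_ofPred_eq, inv_smul_smul]
      constructor
      · rintro ⟨p, hp, rfl⟩
        obtain ⟨γ, hγ⟩ := horbit p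
        exact ⟨γ⁻¹, p.2, by simp [hγ, hp]⟩
      · rintro ⟨γ, i, hs, hy⟩
        exact ⟨_, hs, hy.symm⟩
    rw [himage]
    refine .iUnion fun γ => .iUnion fun i =>
      ((measurable_const_smul γ).prodMk measurable_const) (hs.inter ?_)
    exact measurableSet_eq_fun (measurable_fst.const_smul γ⁻¹) hΦ

theorem exists_free_action_of_injective {α : Type*} [Countable α] [Nonempty α]
    {Φ : X × (α × Bool) → X}
    (hΦ : ∀ i, Measurable fun x => Φ (x, i)) (hinj : Φ.Injective)
    (hΓ : BoundedDisplacement Γ Φ Prod.fst) :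
    ∃ b : FreeGroup α →* Equiv.Perm X, (∀ w, Measurable (b w)) ∧
      (∀ w ≠ 1, ∀ x, b w x ≠ x) ∧ ∀ w, BoundedDisplacement Γ (b w) id := by
  let _ : MeasurableSpace α := ⊤
  have hmeas : Measurable Φ := measurable_from_prod_countable_left hΦ
  have horbit : ∀ p, ∃ γ : Γ, Φ p = γ • p.1 := by
    obtain ⟨S, hS⟩ := hΓ
    exact fun p => (hS p).imp fun _ h => h.2
  have hemb : MeasurableEmbedding Φ := measurableEmbedding_of_forall_exists_smul hmeas hinj horbit
  obtain ⟨J, hJ, hdead⟩ := exists_measurable_slot_of_mem_periodicPts hemb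
  obtain ⟨θ, hθ⟩ := exists_measurableEquiv_boundedDisplacement hemb hΓ
  refine ⟨θ.toEquiv.permCongrHom.toMonoidHom.comp (forestAction hinj J), fun w => ?_,
    fun w hw x hx => ?_, fun w => ?_⟩
  · exact θ.measurable.comp ((measurable_forestAction hemb hJ w).comp θ.symm.measurable)
  · exact (isForestAction_forestAction hinj hdead).apply_ne hw (θ.symm x)
      (θ.toEquiv.eq_symm_apply.2 hx)
  · have hfst : BoundedDisplacement Γ (θ ∘ forestAction hinj J w) θ :=
      (hθ.comp _).trans ((boundedDisplacement_forestAction hinj hΓ w).trans hθ.symm)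
    have hsymm := hfst.comp θ.symm
    rwa [MeasurableEquiv.self_comp_symm] at hsymm

end Transfer

section ConnectedFinsets

variable {P : Type*} {G : SimpleGraph P} {F : Finset P}

/-- The finite set `F` of vertices is connected in `G`, expressed by cuts: every proper nonempty
subset of `F` is joined to the rest of `F` by an edge. -/
def CutConnected (G : SimpleGraph P) (F : Finset P) : Prop :=
  ∀ H ⊂ F, H.Nonempty → ∃ p ∈ H, ∃ q ∈ F, q ∉ H ∧ G.Adj p q

open scoped Classical in
theorem CutConnected.filter_eq_or_lt_card (hF : CutConnected G F) {p : P} (hp : p ∈ F) (k : ℕ) :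
    {q ∈ F | G.edist p q ≤ k} = F ∨ k + 1 ≤ #{q ∈ F | G.edist p q ≤ k} := by
  induction k with
  | zero => exact .inr (Finset.card_pos.2 ⟨p, by simp [hp]⟩)
  | succ k ih =>
    have hmono : {q ∈ F | G.edist p q ≤ k} ⊆ {q ∈ F | G.edist p q ≤ (k + 1 : ℕ)} :=
      Finset.monotone_filter_right F fun q _ hq =>
        hq.trans (Nat.cast_le.2 k.le_succ)
    by_cases heq : {q ∈ F | G.edist p q ≤ k} = F
    · exact .inl ((Finset.filter_subset _ _).antisymm (heq.symm.subset.trans hmono))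
    · obtain ⟨q, hq, r, hr, hrq, hadj⟩ := hF _ ((Finset.filter_subset _ _).ssubset_of_ne heq)
        ⟨p, by simp [hp]⟩
      have hr' : r ∈ ({q ∈ F | G.edist p q ≤ (k + 1 : ℕ)} : Finset P) := by
        refine Finset.mem_filter.2 ⟨hr, (SimpleGraph.edist_triangle (v := q)).trans ?_⟩
        push_cast
        exact add_le_add (Finset.mem_filter.1 hq).2 (SimpleGraph.edist_eq_one_iff_adj.2 hadj).le
      exact .inr ((ih.resolve_left heq).trans_lt
        (Finset.card_lt_card (hmono.ssubset_of_mem_notMem hr' hrq)))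

theorem CutConnected.reachable (hF : CutConnected G F) {p q : P} (hp : p ∈ F) (hq : q ∈ F) :
    G.Reachable p q := by
  classical
  obtain h | h := hF.filter_eq_or_lt_card hp #F
  · rw [← h] at hq
    exact SimpleGraph.edist_ne_top_iff_reachable.1
      (ne_top_of_le_ne_top (ENat.natCast_ne_top _) (Finset.mem_filter.1 hq).2)
  · exact absurd (h.trans (Finset.card_filter_le _ _)) (Nat.not_succ_le_self _)

theorem CutConnected.mul_card_le (hF : CutConnected G F) {K : Finset P} (hK : K ⊆ F) {r : ℕ}
    (hsep : ∀ p ∈ K, ∀ q ∈ K, G.edist p q ≤ (2 * r : ℕ) → p = q) (hcard : 1 < #K) :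
    r * #K ≤ #F := by
  classical
  have hdisj : (K : Set P).PairwiseDisjoint fun p => {q ∈ F | G.edist p q ≤ r} := by
    intro p hp q hq hpq
    refine Finset.disjoint_left.2 fun x hx hx' => hpq (hsep p hp q hq ?_)
    rw [Finset.mem_filter, SimpleGraph.edist_comm] at hx'
    refine SimpleGraph.edist_triangle.trans ((add_le_add (Finset.mem_filter.1 hx).2 hx'.2).trans ?_)
    rw [two_mul, Nat.cast_add]
  have hball : ∀ p ∈ K, r ≤ #{q ∈ F | G.edist p q ≤ r} := by
    intro p hp
    obtain h | h := hF.filter_eq_or_lt_card (hK hp) r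
    · obtain ⟨q, hq, hqp⟩ := Finset.exists_mem_ne hcard p
      have hq' := hK hq
      rw [← h] at hq'
      refine absurd (hsep p hp q hq ((Finset.mem_filter.1 hq').2.trans ?_)) hqp.symm
      exact Nat.cast_le.2 (by omega)
    · exact r.le_succ.trans h
  calc r * #K = ∑ _p ∈ K, r := by rw [Finset.sum_const, smul_eq_mul, mul_comm]
    _ ≤ ∑ p ∈ K, #{q ∈ F | G.edist p q ≤ r} := Finset.sum_le_sum hball
    _ = #(K.biUnion fun p => {q ∈ F | G.edist p q ≤ r}) := (Finset.card_biUnion hdisj).symm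
    _ ≤ #F := Finset.card_le_card (Finset.biUnion_subset.2 fun p _ => Finset.filter_subset _ _)

/-- If one of the sparse sets meets `F` twice, then `F` is long, so that even a set meeting it once
takes up a small fraction of it. -/
theorem CutConnected.two_mul_sum_card_le (hF : CutConnected G F) {K : ℕ → Finset P}
    (hK : ∀ m, K m ⊆ F) {n : ℕ}
    (hsep : ∀ m ≤ n, ∀ p ∈ K m, ∀ q ∈ K m, G.edist p q ≤ (2 * 2 ^ (m + 2) : ℕ) → p = q)
    (hcard : 1 < #(K n)) : 2 * ∑ m ∈ Finset.range (n + 1), #(K m) ≤ #F := by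
  have hm : ∀ m ∈ Finset.range (n + 1), #(K m) ≤ #F / 4 / 2 ^ m := by
    intro m hm
    have hmn : m ≤ n := Nat.lt_succ_iff.1 (Finset.mem_range.1 hm)
    rw [Nat.div_div_eq_div_mul, show 4 * 2 ^ m = 2 ^ (m + 2) by ring,
      Nat.le_div_iff_mul_le (by positivity), mul_comm]
    obtain hle | hlt := le_or_gt #(K m) 1
    · calc 2 ^ (m + 2) * #(K m) ≤ 2 ^ (n + 2) * #(K n) :=
            Nat.mul_le_mul (Nat.pow_le_pow_right two_pos (by omega)) (hle.trans hcard.le)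
        _ ≤ #F := hF.mul_card_le (hK n) (hsep n le_rfl) hcard
    · exact hF.mul_card_le (hK m) (hsep m hmn) hlt
  calc 2 * ∑ m ∈ Finset.range (n + 1), #(K m)
      ≤ 2 * ∑ m ∈ Finset.range (n + 1), #F / 4 / 2 ^ m :=
        Nat.mul_le_mul_left 2 (Finset.sum_le_sum hm)
    _ ≤ 2 * (#F / 4 * 2 / (2 - 1)) := Nat.mul_le_mul_left 2 (Nat.geom_sum_le le_rfl _ _)
    _ ≤ #F := by omega

end ConnectedFinsets

section Hall

variable {P X : Type*}

/-- The graph in which two indices are adjacent if their sets of admissible values overlap. -/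
def overlapGraph (t : P → Finset X) : SimpleGraph P :=
  SimpleGraph.fromRel fun p q => ¬ Disjoint (t p) (t q)

variable [DecidableEq X] {t T : P → Finset X}

theorem exists_cutConnected_of_card_biUnion_lt (hT : ∀ p, T p ⊆ t p) {F : Finset P}
    (hF : #(F.biUnion T) < #F) :
    ∃ F, CutConnected (overlapGraph t) F ∧ #(F.biUnion T) < #F := by
  classical
  obtain ⟨F, hF, hmin⟩ := exists_minimal_of_wellFoundedLT (fun F => #(F.biUnion T) < #F) ⟨F, hF⟩
  refine ⟨F, fun H hHF hH => ?_, hF⟩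
  by_contra! hadj
  have hdisj : Disjoint (H.biUnion T) ((F \ H).biUnion T) := by
    rw [Finset.disjoint_biUnion_left]
    refine fun p hp => (Finset.disjoint_biUnion_right _ _ _).2 fun q hq => ?_
    obtain ⟨hqF, hqH⟩ := Finset.mem_sdiff.1 hq
    by_contra h
    exact hadj p hp q hqF hqH
      ⟨ne_of_mem_of_not_mem hp hqH, .inl fun h' => h (h'.mono (hT p) (hT q))⟩
  have hle : ∀ H' ⊂ F, #H' ≤ #(H'.biUnion T) := fun H' hH' => by
    by_contra! h
    exact hH'.not_subset (hmin h hH'.subset)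
  have hcard : #(F.biUnion T) = #(H.biUnion T) + #((F \ H).biUnion T) := by
    rw [← Finset.card_union_of_disjoint hdisj, ← Finset.union_biUnion,
      Finset.union_sdiff_of_subset hHF.subset]
  have := hle H hHF
  have := hle (F \ H) (Finset.sdiff_ssubset hHF.subset hH)
  have := Finset.card_sdiff_add_card_eq_card hHF.subset
  omega

open scoped Classical in
/-- A minimal violator of Hall's condition is connected. If it meets the last sparse set twice, the
sparse sets together contain at most half of it, and the other half already has enough values. -/
theorem card_le_card_biUnion_of_sparse_modification (ht : ∀ F : Finset P, 2 * #F ≤ #(F.biUnion t))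
    (hT : ∀ p, T p ⊆ t p) {K : ℕ → Set P} {n : ℕ} (hfree : ∀ p, (∀ m ≤ n, p ∉ K m) → T p = t p)
    (hsep : ∀ m ≤ n, ∀ p ∈ K m, ∀ q ∈ K m,
      (overlapGraph t).edist p q ≤ (2 * 2 ^ (m + 2) : ℕ) → p = q)
    (hone : ∀ F : Finset P, (∀ p ∈ F, ∀ q ∈ F, (overlapGraph t).Reachable p q) →
      #{p ∈ F | p ∈ K n} ≤ 1 → #F ≤ #(F.biUnion T)) (F : Finset P) :
    #F ≤ #(F.biUnion T) := by
  by_contra! hF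
  obtain ⟨F, hconn, hF⟩ := exists_cutConnected_of_card_biUnion_lt hT hF
  refine hF.not_ge ?_
  obtain hle | hlt := le_or_gt #{p ∈ F | p ∈ K n} 1
  · exact hone F (fun p hp q hq => hconn.reachable hp hq) hle
  have hsum := hconn.two_mul_sum_card_le (K := fun m => {p ∈ F | p ∈ K m})
    (fun m => Finset.filter_subset _ _) (fun m hm p hp q hq =>
      hsep m hm p (Finset.mem_filter.1 hp).2 q (Finset.mem_filter.1 hq).2) hlt
  set E := (Finset.range (n + 1)).biUnion fun m => {p ∈ F | p ∈ K m}
  have hE : 2 * #E ≤ #F := (Nat.mul_le_mul_left 2 Finset.card_biUnion_le).trans hsum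
  have hT_eq : (F \ E).biUnion T = (F \ E).biUnion t := by
    refine Finset.biUnion_congr rfl fun p hp => hfree p fun m hm hpm => ?_
    obtain ⟨hpF, hpE⟩ := Finset.mem_sdiff.1 hp
    exact hpE (Finset.mem_biUnion.2
      ⟨m, Finset.mem_range_succ_iff.2 hm, Finset.mem_filter.2 ⟨hpF, hpm⟩⟩)
  calc #F ≤ 2 * #(F \ E) := by
        have := Finset.card_sdiff_add_card F E
        have := Finset.le_card_sdiff E F
        omega
    _ ≤ #((F \ E).biUnion T) := hT_eq ▸ ht (F \ E)
    _ ≤ #(F.biUnion T) :=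
        Finset.card_le_card (Finset.biUnion_subset_biUnion_of_subset_left T Finset.sdiff_subset)

end Hall

section Refinement

variable {Γ X ι : Type*} [Group Γ] [MulAction Γ X]

open scoped Classical

/-- The values admissible for the index `p` over the point `p.1`, when `σ p` is the set of group
elements by which `p` may act. -/
noncomputable def targets (σ : X × ι → Finset Γ) (p : X × ι) : Finset X :=
  (σ p).image (· • p.1)

theorem mem_targets {σ : X × ι → Finset Γ} {p : X × ι} {y : X} :
    y ∈ targets σ p ↔ ∃ s ∈ σ p, s • p.1 = y := by
  simp [targets]

theorem targets_mono {σ σ' : X × ι → Finset Γ} {p : X × ι} (h : σ p ⊆ σ' p) :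
    targets σ p ⊆ targets σ' p :=
  Finset.image_subset_image h

/-- Finitely many indices over the orbit of `x` always have an injective choice of targets. The
orbit is parametrized by `Γ`, so that for countable `Γ` only countable quantifiers occur. -/
def MatchableAt (x : X) (σ : X × ι → Finset Γ) : Prop :=
  ∀ F : Finset (Γ × ι), ∃ c : F → Γ, (∀ p, c p ∈ σ (p.1.1 • x, p.1.2)) ∧
    ∀ p q, c p • p.1.1 • x = c q • q.1.1 • x → p.1.1 • x = q.1.1 • x ∧ p.1.2 = q.1.2

theorem matchableAt_of_injective {σ : X × ι → Finset Γ} {f : X × ι → X} (hf : f.Injective)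
    (hfσ : ∀ p, f p ∈ targets σ p) (x : X) : MatchableAt x σ := by
  choose g hgσ hg using fun p => mem_targets.1 (hfσ p)
  refine fun F => ⟨fun p => g (p.1.1 • x, p.1.2), fun p => hgσ _, fun p q hpq => ?_⟩
  have := hf (((hg (p.1.1 • x, p.1.2)).symm.trans hpq).trans (hg (q.1.1 • x, q.1.2)))
  exact Prod.ext_iff.1 this

theorem MatchableAt.card_le_card_biUnion {x : X} {σ : X × ι → Finset Γ} (h : MatchableAt x σ)
    {F : Finset (X × ι)} (hF : ∀ p ∈ F, p.1 ∈ MulAction.orbit Γ x) :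
    #F ≤ #(F.biUnion (targets σ)) := by
  choose g hg using fun p : F => hF p p.2
  obtain ⟨c, hcσ, hc⟩ := h (Finset.univ.image fun p => (g p, p.1.2))
  let d (p : F) : Γ := c ⟨(g p, p.1.2), Finset.mem_image_of_mem _ (Finset.mem_univ p)⟩
  have hd : Function.Injective fun p : F => d p • p.1.1 := by
    intro p q hpq
    have := hc ⟨(g p, p.1.2), Finset.mem_image_of_mem _ (Finset.mem_univ p)⟩
      ⟨(g q, q.1.2), Finset.mem_image_of_mem _ (Finset.mem_univ q)⟩
    simp only [hg] at this
    exact Subtype.ext (Prod.ext_iff.2 (this hpq))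
  rw [← Finset.card_attach, ← Finset.card_image_of_injective _ hd]
  refine Finset.card_le_card (Finset.image_subset_iff.2 fun p _ => ?_)
  refine Finset.mem_biUnion.2 ⟨p, p.2, mem_targets.2 ⟨d p, ?_, rfl⟩⟩
  simpa only [hg] using hcσ ⟨(g p, p.1.2), Finset.mem_image_of_mem _ (Finset.mem_univ p)⟩

theorem measurableSet_matchableAt_update [Countable Γ] [Countable ι] [MeasurableSpace X]
    [MeasurableConstSMul Γ X] [MeasurableEq X] {σ : X × ι → Finset Γ}
    (hσ : ∀ i s, MeasurableSet {x | s ∈ σ (x, i)}) (i : ι) (s : Γ) :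
    MeasurableSet {x | MatchableAt x (Function.update σ (x, i) {s})} := by
  have heq (γ δ : Γ) : MeasurableSet {x : X | γ • x = δ • x} :=
    measurableSet_eq_fun (measurable_const_smul γ) (measurable_const_smul δ)
  have hupdate (γ : Γ) (j : ι) (c : Γ) :
      Measurable fun x => c ∈ Function.update σ (x, i) {s} (γ • x, j) := by
    have hite (x : X) : (c ∈ Function.update σ (x, i) {s} (γ • x, j)) =
        if γ • x = (1 : Γ) • x ∧ j = i then c = s else c ∈ σ (γ • x, j) := by
      simp only [Function.update_apply, Prod.mk.injEq, one_smul]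
      split_ifs <;> simp
    simp_rw [hite]
    exact .ite ((heq γ 1).inter (.const _)) measurable_const
      (measurableSet_setOfPred.1 (measurable_const_smul γ (hσ j c)))
  refine measurableSet_setOfPred.2 (.forall fun F => .exists fun c => ?_)
  refine (Measurable.forall fun p => hupdate _ _ _).and (.forall fun p => .forall fun q => ?_)
  simp_rw [smul_smul]
  exact (measurableSet_setOfPred.1 (heq _ _)).imp
    ((measurableSet_setOfPred.1 (heq _ _)).and measurable_const)

/-- No two indices in `K` lie over points which differ by an element of `V`. -/
def IsSparse (V : Finset Γ) (K : Set (X × ι)) : Prop :=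
  ∀ p ∈ K, ∀ q ∈ K, ∀ w ∈ V, q.1 = w • p.1 → p = q

theorem exists_mem_pow_smul_eq_of_edist_le {S : Finset Γ} {p q : X × ι} {k : ℕ}
    (h : (overlapGraph (targets fun _ => S)).edist p q ≤ k) :
    ∃ w ∈ insert 1 (S⁻¹ * S) ^ k, q.1 = w • p.1 := by
  obtain ⟨walk, hwalk⟩ :=
    SimpleGraph.exists_walk_of_edist_ne_top (ne_top_of_le_ne_top (ENat.natCast_ne_top k) h)
  rw [← hwalk, Nat.cast_le] at h
  suffices ∃ w ∈ insert 1 (S⁻¹ * S) ^ walk.length, q.1 = w • p.1 from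
    this.imp fun w hw => hw.imp_left
      (Finset.pow_subset_pow_right (Finset.mem_insert_self _ _) h ·)
  clear hwalk h
  induction walk with
  | nil => exact ⟨1, by simp⟩
  | @cons p r q hadj walk ih =>
    obtain ⟨w, hw, hrq⟩ := ih
    have hpr : ∃ y, y ∈ targets (fun _ => S) p ∧ y ∈ targets (fun _ => S) r := by
      obtain ⟨-, h | h⟩ := hadj
      · exact Finset.not_disjoint_iff.1 h
      · exact (Finset.not_disjoint_iff.1 h).imp fun _ => And.symm
    obtain ⟨y, hyp, hyr⟩ := hpr
    obtain ⟨s, hs, rfl⟩ := mem_targets.1 hyp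
    obtain ⟨s', hs', h⟩ := mem_targets.1 hyr
    refine ⟨w * (s'⁻¹ * s), ?_, ?_⟩
    · rw [SimpleGraph.Walk.length_cons, pow_succ]
      exact Finset.mul_mem_mul hw
        (Finset.mem_insert_of_mem (Finset.mul_mem_mul (Finset.inv_mem_inv hs') hs))
    · rw [hrq, mul_smul, mul_smul, ← h, inv_smul_smul]

variable [Encodable Γ]

/-- Restrict the choice at every index in `K` to the first group element in the given enumeration
which keeps the indices over the orbit matchable. -/
noncomputable def refineOn (K : Set (X × ι)) (σ : X × ι → Finset Γ) (p : X × ι) : Finset Γ :=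
  if p ∈ K then {s ∈ σ p | MatchableAt p.1 (Function.update σ p {s}) ∧
    ∀ s' ∈ σ p, MatchableAt p.1 (Function.update σ p {s'}) →
      Encodable.encode s ≤ Encodable.encode s'}
  else σ p

theorem refineOn_of_notMem {K : Set (X × ι)} {p : X × ι} (hp : p ∉ K) (σ : X × ι → Finset Γ) :
    refineOn K σ p = σ p :=
  if_neg hp

theorem refineOn_subset (K : Set (X × ι)) (σ : X × ι → Finset Γ) (p : X × ι) :
    refineOn K σ p ⊆ σ p := by
  rw [refineOn]
  split_ifs
  exacts [Finset.filter_subset _ _, subset_rfl]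

theorem eq_of_mem_refineOn {K : Set (X × ι)} {σ : X × ι → Finset Γ} {p : X × ι} (hp : p ∈ K)
    {s s' : Γ} (hs : s ∈ refineOn K σ p) (hs' : s' ∈ refineOn K σ p) : s = s' := by
  rw [refineOn, if_pos hp, Finset.mem_filter] at hs hs'
  exact Encodable.encode_injective
    ((hs.2.2 s' hs'.1 hs'.2.1).antisymm (hs'.2.2 s hs.1 hs.2.1))

theorem exists_refineOn_eq_singleton {σ : X × ι → Finset Γ}
    (hσ : ∀ F : Finset (X × ι), #F ≤ #(F.biUnion (targets σ))) {K : Set (X × ι)} {p : X × ι}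
    (hp : p ∈ K) :
    ∃ s, refineOn K σ p = {s} ∧ MatchableAt p.1 (Function.update σ p {s}) := by
  obtain ⟨f, hf, hfσ⟩ :=
    (Finset.all_card_le_biUnion_card_iff_exists_injective (targets σ)).1 hσ
  obtain ⟨s, hs, hsf⟩ := mem_targets.1 (hfσ p)
  have hfs : ∀ q, f q ∈ targets (Function.update σ p {s}) q := by
    intro q
    obtain rfl | hq := eq_or_ne q p
    · simp [mem_targets, hsf]
    · simpa [mem_targets, hq] using mem_targets.1 (hfσ q)
  obtain ⟨s₀, hs₀, hmin⟩ := Finset.exists_min_image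
    {s ∈ σ p | MatchableAt p.1 (Function.update σ p {s})} Encodable.encode
    ⟨s, Finset.mem_filter.2 ⟨hs, matchableAt_of_injective hf hfs p.1⟩⟩
  obtain ⟨hs₀σ, hs₀p⟩ := Finset.mem_filter.1 hs₀
  have hmem : s₀ ∈ refineOn K σ p := by
    rw [refineOn, if_pos hp, Finset.mem_filter]
    exact ⟨hs₀σ, hs₀p, fun s' hs' h => hmin s' (Finset.mem_filter.2 ⟨hs', h⟩)⟩
  exact ⟨s₀, Finset.eq_singleton_iff_unique_mem.2
    ⟨hmem, fun s hs => eq_of_mem_refineOn hp hs hmem⟩, hs₀p⟩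

theorem card_le_card_biUnion_refineOn {σ : X × ι → Finset Γ}
    (hσ : ∀ F : Finset (X × ι), #F ≤ #(F.biUnion (targets σ))) {K : Set (X × ι)}
    {F : Finset (X × ι)} (horbit : ∀ p ∈ F, ∀ q ∈ F, q.1 ∈ MulAction.orbit Γ p.1)
    (hone : #{p ∈ F | p ∈ K} ≤ 1) : #F ≤ #(F.biUnion (targets (refineOn K σ))) := by
  by_cases hF : ∃ p ∈ F, p ∈ K
  · obtain ⟨p, hpF, hpK⟩ := hF
    obtain ⟨s, hs, hmatch⟩ := exists_refineOn_eq_singleton hσ hpK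
    have heq : ∀ q ∈ F, targets (refineOn K σ) q = targets (Function.update σ p {s}) q := by
      intro q hq
      obtain rfl | hqp := eq_or_ne q p
      · simp [targets, hs]
      · have hqK : q ∉ K := fun hqK => hqp (Finset.card_le_one.1 hone q
          (Finset.mem_filter.2 ⟨hq, hqK⟩) p (Finset.mem_filter.2 ⟨hpF, hpK⟩))
        simp [targets, refineOn_of_notMem hqK, hqp]
    rw [Finset.biUnion_congr rfl heq]
    exact hmatch.card_le_card_biUnion (horbit p hpF)
  · push Not at hF
    have heq : ∀ p ∈ F, targets (refineOn K σ) p = targets σ p := fun p hp => by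
      rw [targets, refineOn_of_notMem (hF p hp), ← targets]
    exact Finset.biUnion_congr rfl heq ▸ hσ F

/-- Start from `S` at every index and refine successively on `K 0, K 1, …`. -/
noncomputable def refinement (S : Finset Γ) (K : ℕ → Set (X × ι)) : ℕ → X × ι → Finset Γ
  | 0 => fun _ => S
  | n + 1 => refineOn (K n) (refinement S K n)

variable {S : Finset Γ} {K : ℕ → Set (X × ι)}

theorem refinement_antitone (p : X × ι) : Antitone fun n => refinement S K n p :=
  antitone_nat_of_succ_le fun n => refineOn_subset (K n) (refinement S K n) p

theorem refinement_subset (n : ℕ) (p : X × ι) : refinement S K n p ⊆ S :=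
  refinement_antitone p (Nat.zero_le n)

theorem refinement_eq_of_forall_notMem {p : X × ι} {n : ℕ} (hp : ∀ m < n, p ∉ K m) :
    refinement S K n p = S := by
  induction n with
  | zero => rfl
  | succ n ih =>
    exact (refineOn_of_notMem (hp n n.lt_succ_self) _).trans
      (ih fun m hm => hp m (hm.trans n.lt_succ_self))

theorem card_le_card_biUnion_refinement
    (hS : ∀ F : Finset (X × ι), 2 * #F ≤ #(F.biUnion (targets fun _ => S)))
    (hK : ∀ n, IsSparse (insert 1 (S⁻¹ * S) ^ (2 * 2 ^ (n + 2))) (K n)) (n : ℕ)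
    (F : Finset (X × ι)) : #F ≤ #(F.biUnion (targets (refinement S K n))) := by
  induction n generalizing F with
  | zero => exact (Nat.le_mul_of_pos_left _ two_pos).trans (hS F)
  | succ n ih =>
    refine card_le_card_biUnion_of_sparse_modification (K := K) (n := n) hS
      (fun p => targets_mono (refinement_subset _ p)) (fun p hp => ?_)
      (fun m _ p hp q hq hpq => ?_) (fun F hF hone => ?_) F
    · rw [targets, refinement_eq_of_forall_notMem fun m hm => hp m (Nat.lt_succ_iff.1 hm), targets]
    · obtain ⟨w, hw, h⟩ := exists_mem_pow_smul_eq_of_edist_le hpq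
      exact hK m p hp q hq w hw h
    · refine card_le_card_biUnion_refineOn ih (fun p hp q hq => ?_) hone
      obtain ⟨walk⟩ := hF p hp q hq
      obtain ⟨w, -, h⟩ := exists_mem_pow_smul_eq_of_edist_le (SimpleGraph.Walk.edist_le walk)
      exact ⟨w, h.symm⟩

/-- Only finitely many group elements are ever discarded at a given index, so a finite set of
indices does not see the difference between the limit and a late stage. -/
theorem exists_injective_mem_refinement
    (hS : ∀ F : Finset (X × ι), 2 * #F ≤ #(F.biUnion (targets fun _ => S)))
    (hK : ∀ n, IsSparse (insert 1 (S⁻¹ * S) ^ (2 * 2 ^ (n + 2))) (K n)) :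
    ∃ Φ : X × ι → X, Φ.Injective ∧
      ∀ p, ∃ s, (∀ n, s ∈ refinement S K n p) ∧ Φ p = s • p.1 := by
  let τ (p : X × ι) : Finset Γ := {s ∈ S | ∀ n, s ∈ refinement S K n p}
  have hstable (p : X × ι) : ∀ᶠ n in Filter.atTop, refinement S K n p ⊆ τ p := by
    have hmem (s : Γ) (hs : s ∈ S) :
        ∀ᶠ n in Filter.atTop, s ∈ refinement S K n p → s ∈ τ p := by
      by_cases h : ∀ n, s ∈ refinement S K n p
      · exact .of_forall fun _ _ => Finset.mem_filter.2 ⟨hs, h⟩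
      · obtain ⟨m, hm⟩ := not_forall.1 h
        filter_upwards [Filter.eventually_ge_atTop m] with n hmn hn
        exact absurd (refinement_antitone p hmn hn) hm
    filter_upwards [(Filter.eventually_all_finset S).2 hmem] with n hn s hs
    exact hn s (refinement_subset n p hs) hs
  have hτ (F : Finset (X × ι)) : #F ≤ #(F.biUnion (targets τ)) := by
    obtain ⟨n, hn⟩ := ((Filter.eventually_all_finset F).2 fun p _ => hstable p).exists
    exact (card_le_card_biUnion_refinement hS hK n F).trans
      (Finset.card_le_card (Finset.biUnion_mono fun p hp => targets_mono (hn p hp)))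
  obtain ⟨Φ, hΦ, hΦτ⟩ :=
    (Finset.all_card_le_biUnion_card_iff_exists_injective (targets τ)).1 hτ
  refine ⟨Φ, hΦ, fun p => ?_⟩
  obtain ⟨s, hs, h⟩ := mem_targets.1 (hΦτ p)
  exact ⟨s, (Finset.mem_filter.1 hs).2, h.symm⟩

section Measurability

variable [Countable ι] [MeasurableSpace X] [MeasurableConstSMul Γ X] [MeasurableEq X]

theorem measurableSet_mem_refineOn {σ : X × ι → Finset Γ}
    (hσ : ∀ i s, MeasurableSet {x | s ∈ σ (x, i)}) {K : Set (X × ι)}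
    (hK : ∀ i, MeasurableSet {x | (x, i) ∈ K}) (i : ι) (s : Γ) :
    MeasurableSet {x | s ∈ refineOn K σ (x, i)} := by
  have hmatch := fun s => measurableSet_setOfPred.1 (measurableSet_matchableAt_update hσ i s)
  have hσ' := fun s => measurableSet_setOfPred.1 (hσ i s)
  refine measurableSet_setOfPred.2 ?_
  have heq : (fun x => s ∈ refineOn K σ (x, i)) = fun x => s ∈ σ (x, i) ∧
      ((x, i) ∈ K → MatchableAt x (Function.update σ (x, i) {s}) ∧
        ∀ s' ∈ σ (x, i), MatchableAt x (Function.update σ (x, i) {s'}) →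
          Encodable.encode s ≤ Encodable.encode s') := by
    funext x
    rw [refineOn]
    split_ifs with h <;> simp [h]
  rw [heq]
  exact (hσ' s).and ((measurableSet_setOfPred.1 (hK i)).imp ((hmatch s).and
    (.forall fun s' => (hσ' s').imp ((hmatch s').imp measurable_const))))

theorem measurableSet_mem_refinement (hK : ∀ n i, MeasurableSet {x | (x, i) ∈ K n}) (n : ℕ)
    (i : ι) (s : Γ) : MeasurableSet {x | s ∈ refinement S K n (x, i)} := by
  induction n generalizing i s with
  | zero => exact .const (s ∈ S)
  | succ n ih => exact measurableSet_mem_refineOn ih (hK n) i s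

theorem measurableSet_eq_smul_of_mem_refinement
    (hK : ∀ n i, MeasurableSet {x | (x, i) ∈ K n}) {Φ : X × ι → X}
    (hΦ : ∀ p, ∃ s, (∀ n, s ∈ refinement S K n p) ∧ Φ p = s • p.1) (i : ι) (γ : Γ) :
    MeasurableSet {x | (∃ n, (x, i) ∈ K n) ∧ Φ (x, i) = γ • x} := by
  have heq : {x | (∃ n, (x, i) ∈ K n) ∧ Φ (x, i) = γ • x} =
      {x | (∃ n, (x, i) ∈ K n) ∧ ∃ s : Γ, (∀ n, s ∈ refinement S K n (x, i)) ∧ s • x = γ • x} := by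
    ext x
    refine and_congr_right fun ⟨n, hn⟩ => ?_
    obtain ⟨s, hs, hsΦ⟩ := hΦ (x, i)
    refine ⟨fun h => ⟨s, hs, hsΦ.symm.trans h⟩, fun ⟨s', hs', h⟩ => ?_⟩
    rw [hsΦ, eq_of_mem_refineOn hn (hs (n + 1)) (hs' (n + 1)), h]
  rw [heq]
  refine measurableSet_setOfPred.2 (.and (.exists fun n => ?_) (.exists fun s => ?_))
  · exact measurableSet_setOfPred.1 (hK n i)
  · exact .and (.forall fun n => measurableSet_setOfPred.1 (measurableSet_mem_refinement hK n i s))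
      (measurableSet_setOfPred.1
        (measurableSet_eq_fun (measurable_const_smul s) (measurable_const_smul γ)))

end Measurability

end Refinement

section Category

variable {Γ X : Type*} [Group Γ] [MulAction Γ X]

theorem exists_countable_sparse_cover [MeasurableSpace X] [MeasurableSpace.CountablySeparated X]
    [MeasurableConstSMul Γ X] (V : Finset Γ) :
    ∃ 𝒜 : Set (Set X), 𝒜.Countable ∧ ⋃₀ 𝒜 = Set.univ ∧
      ∀ A ∈ 𝒜, MeasurableSet A ∧ ∀ x ∈ A, ∀ w ∈ V, w • x ∈ A → w • x = x := by
  have := measurableEq_of_countablySeparated X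
  obtain ⟨f, hf, hinj⟩ := MeasurableSpace.measurable_injection_nat_bool_of_countablySeparated X
  let A (U : Set (ℕ → Bool)) : Set X :=
    f ⁻¹' U ∩ ⋂ w ∈ V, {x | w • x = x} ∪ (w • ·) ⁻¹' (f ⁻¹' U)ᶜ
  refine ⟨A '' TopologicalSpace.countableBasis (ℕ → Bool),
    (TopologicalSpace.countable_countableBasis _).image A, ?_, ?_⟩
  · refine Set.eq_univ_of_forall fun x => ?_
    have hfin : ((f ∘ (· • x)) '' (V : Set Γ) \ {f x}).Finite := (V.finite_toSet.image _).sdiff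
    obtain ⟨U, hU, hxU, hdisj⟩ :=
      (TopologicalSpace.isBasis_countableBasis (ℕ → Bool)).exists_subset_of_mem_open
        (show f x ∈ (_ \ {f x})ᶜ by simp) hfin.isClosed.isOpen_compl
    refine ⟨_, ⟨U, hU, rfl⟩, hxU, Set.mem_iInter₂.2 fun w hw => ?_⟩
    refine or_iff_not_imp_left.2 fun hwx hwU => hdisj hwU ⟨⟨w, hw, rfl⟩, fun h => hwx (hinj h)⟩
  · rintro _ ⟨U, hU, rfl⟩
    have hUm := hf (TopologicalSpace.isOpen_of_mem_countableBasis hU).measurableSet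
    refine ⟨hUm.inter (V.measurableSet_biInter fun w _ => ?_), fun x hx w hw hwx => ?_⟩
    · exact (measurableSet_eq_fun (measurable_const_smul w) measurable_id).union
        (measurable_const_smul w hUm.compl)
    · exact (Set.mem_iInter₂.1 hx.2 w hw).resolve_right (not_not_intro hwx.1)

variable [TopologicalSpace X]

theorem exists_sparse_not_isMeagre_inter_preimage [MeasurableSpace X]
    [MeasurableSpace.CountablySeparated X] [MeasurableConstSMul Γ X] (V : Finset Γ) (γ : Γ)
    {O : Set X} (hO : ¬ IsMeagre O) :
    ∃ A, MeasurableSet A ∧ (∀ x ∈ A, ∀ w ∈ V, w • x ∈ A → w • x = x) ∧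
      ¬ IsMeagre (O ∩ (γ • ·) ⁻¹' A) := by
  obtain ⟨𝒜, hcount, hcover, h𝒜⟩ := exists_countable_sparse_cover (X := X) V
  have hO_eq : ⋃ A ∈ 𝒜, O ∩ (γ • ·) ⁻¹' A = O := by
    rw [← Set.inter_iUnion₂, ← Set.preimage_iUnion₂, ← Set.sUnion_eq_biUnion, hcover,
      Set.preimage_univ, Set.inter_univ]
  rw [← hO_eq] at hO
  obtain ⟨A, hA, hmeagre⟩ := exists_of_not_isMeagre_biUnion hcount hO
  exact ⟨A, (h𝒜 A hA).1, (h𝒜 A hA).2, hmeagre⟩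

theorem mem_residual_of_forall_not_isMeagre_inter [SecondCountableTopology X] {Q : Set X}
    (hQ : BaireMeasurableSet Q)
    (h : ∀ O ∈ TopologicalSpace.countableBasis X, ¬ IsMeagre O → ¬ IsMeagre (O ∩ Q)) :
    Q ∈ residual X := by
  obtain ⟨U, hU, hQU⟩ := hQ.compl.residualEq_isOpen
  have hUQ : IsMeagre (U ∩ Q) := by
    filter_upwards [hQU] with x hx hxU
    exact (iff_of_eq hx).2 hxU.1 hxU.2
  have hUmeagre : IsMeagre U := by
    rw [(TopologicalSpace.isBasis_countableBasis X).open_eq_sUnion' hU, Set.sUnion_eq_biUnion]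
    refine isMeagre_biUnion
      ((TopologicalSpace.countable_countableBasis X).mono (Set.sep_subset _ _)) fun O hO => ?_
    exact not_not.1 fun hOm => h O hO.1 hOm (hUQ.mono (Set.inter_subset_inter_left Q hO.2))
  filter_upwards [hQU, hUmeagre] with x hx hxU
  exact not_not.1 fun hxQ => hxU ((iff_of_eq hx).1 hxQ)

variable [SecondCountableTopology X] [MeasurableSpace X] [BorelSpace X]
  [MeasurableSpace.CountablySeparated X] [Countable Γ] [MeasurableConstSMul Γ X]

/-- One sparse set is spent on each translate, each index and each non-meagre basic open set. -/
theorem exists_isSparse_forall_exists_mem_residual {ι : Type*} [Countable ι] (V : ℕ → Finset Γ) :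
    ∃ K : ℕ → Set (X × ι), (∀ n i, MeasurableSet {x | (x, i) ∈ K n}) ∧
      (∀ n, IsSparse (V n) (K n)) ∧
      {x | ∀ (γ : Γ) (i : ι), ∃ n, (γ • x, i) ∈ K n} ∈ residual X := by
  let T := Γ × ι × {O ∈ TopologicalSpace.countableBasis X | ¬ IsMeagre O}
  have : Countable {O ∈ TopologicalSpace.countableBasis X | ¬ IsMeagre O} :=
    ((TopologicalSpace.countable_countableBasis X).mono (Set.sep_subset _ _)).to_subtype
  obtain ⟨e, he⟩ := exists_injective_nat T
  choose A hA hsparse hmeagre using fun t : T =>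
    exists_sparse_not_isMeagre_inter_preimage (V (e t)) t.1 t.2.2.2.2
  let K (n : ℕ) : Set (X × ι) := {p | ∃ t : T, e t = n ∧ t.2.1 = p.2 ∧ p.1 ∈ A t}
  have hK (n : ℕ) (i : ι) : MeasurableSet {x | (x, i) ∈ K n} := by
    change MeasurableSet {x | ∃ t : T, e t = n ∧ t.2.1 = i ∧ x ∈ A t}
    exact measurableSet_setOfPred.2
      (.exists fun t => measurable_const.and (measurable_const.and (hA t).mem))
  refine ⟨K, hK, ?_, ?_⟩
  · rintro _ ⟨x, _⟩ ⟨t, rfl, rfl, hx⟩ ⟨_, _⟩ ⟨t', he', rfl, hy⟩ w hw rfl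
    obtain rfl := he he'
    exact Prod.ext (hsparse t' x hx w hw hy).symm rfl
  simp only [Set.ofPred_forall]
  refine countable_iInter_mem.2 fun γ => countable_iInter_mem.2 fun i => ?_
  refine mem_residual_of_forall_not_isMeagre_inter (MeasurableSet.baireMeasurableSet ?_)
    fun O hO hOm h => ?_
  · exact measurableSet_setOfPred.2 (.exists fun n =>
      measurableSet_setOfPred.1 (measurable_const_smul γ (hK n i)))
  · let t : T := (γ, i, ⟨O, hO, hOm⟩)
    have hsub : (γ • ·) ⁻¹' A t ⊆ {x | ∃ n, (γ • x, i) ∈ K n} :=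
      fun _ hx => ⟨e t, t, rfl, rfl, hx⟩
    exact hmeagre t (h.mono (Set.inter_subset_inter_right O hsub))

end Category

section Localization

open scoped MeasureTheory

variable {Γ X : Type*} [MeasurableSpace X] {B : Set X}

/-- The σ-algebra of the sets whose trace on `B` is measurable. It lets the measurable theory be
applied to maps of the whole space which are only controlled on `B`. -/
@[reducible]
def traceMeasurableSpace (B : Set X) : MeasurableSpace X :=
  MeasurableSpace.map (Subtype.val : B → X) inferInstance

theorem measurableSet_traceMeasurableSpace (hB : MeasurableSet B) {s : Set X} :
    MeasurableSet[traceMeasurableSpace B] s ↔ MeasurableSet (B ∩ s) := by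
  change MeasurableSet ((Subtype.val : B → X) ⁻¹' s) ↔ _
  rw [← (MeasurableEmbedding.subtype_coe hB).measurableSet_image, Subtype.image_preimage_coe]

theorem le_traceMeasurableSpace (B : Set X) : ‹MeasurableSpace X› ≤ traceMeasurableSpace B :=
  MeasurableSpace.comap_le_iff_le_map.1 le_rfl

theorem measurableEq_traceMeasurableSpace [MeasurableEq X] (B : Set X) :
    @MeasurableEq X (traceMeasurableSpace B) :=
  @MeasurableEq.mk X (traceMeasurableSpace B)
    (sup_le_sup (MeasurableSpace.comap_mono (le_traceMeasurableSpace B))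
      (MeasurableSpace.comap_mono (le_traceMeasurableSpace B)) _ measurableSet_diagonal)

variable [Group Γ] [MulAction Γ X] [MeasurableConstSMul Γ X]

theorem measurableConstSMul_traceMeasurableSpace (hB : MeasurableSet B)
    (hΓB : ∀ (γ : Γ) (x : X), γ • x ∈ B ↔ x ∈ B) :
    @MeasurableConstSMul Γ X _ (traceMeasurableSpace B) := by
  refine @MeasurableConstSMul.mk Γ X _ (traceMeasurableSpace B) fun γ s hs => ?_
  rw [measurableSet_traceMeasurableSpace hB] at hs ⊢
  have hpre : B ∩ (γ • ·) ⁻¹' s = (γ • ·) ⁻¹' (B ∩ s) := by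
    ext x
    exact and_congr_left fun _ => (hΓB γ x).symm
  exact hpre ▸ measurable_const_smul γ hs

theorem measurable_traceMeasurableSpace_of_pieces [Countable Γ] (hB : MeasurableSet B)
    (hΓB : ∀ (γ : Γ) (x : X), γ • x ∈ B ↔ x ∈ B) {f : X → X} (hf : ∀ x, ∃ γ : Γ, f x = γ • x)
    (hpiece : ∀ γ : Γ, MeasurableSet (B ∩ {x | f x = γ • x})) :
    Measurable[traceMeasurableSpace B, traceMeasurableSpace B] f := by
  intro s hs
  rw [measurableSet_traceMeasurableSpace hB] at hs ⊢
  have hpre : B ∩ f ⁻¹' s = ⋃ γ : Γ, (B ∩ {x | f x = γ • x}) ∩ (γ • ·) ⁻¹' (B ∩ s) := by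
    ext x
    simp only [Set.mem_inter_iff, Set.mem_preimage, Set.mem_iUnion, Set.mem_ofPred_eq]
    constructor
    · rintro ⟨hx, hxs⟩
      obtain ⟨γ, hγ⟩ := hf x
      exact ⟨γ, ⟨hx, hγ⟩, (hΓB γ x).2 hx, hγ ▸ hxs⟩
    · rintro ⟨γ, ⟨hx, hγ⟩, -, hs⟩
      exact ⟨hx, hγ ▸ hs⟩
  rw [hpre]
  exact .iUnion fun γ => (hpiece γ).inter (measurable_const_smul γ hs)

end Localization

section Expansion

variable {Γ X : Type*} [Group Γ] [MulAction Γ X]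

theorem exists_injective_of_iUnion_smul_eq_univ {ι : Type*} {A : ι → Set X} {α : ι → Γ}
    (hA : ∀ i j, i ≠ j → Disjoint (A i) (A j)) (hα : ⋃ i, α i • A i = Set.univ) :
    ∃ f : X → X, f.Injective ∧ ∀ x, ∃ i, f x ∈ A i ∧ f x = (α i)⁻¹ • x := by
  choose i hi using fun x => Set.mem_iUnion.1 (hα.symm ▸ Set.mem_univ x : x ∈ ⋃ i, α i • A i)
  simp only [Set.mem_smul_set_iff_inv_smul_mem] at hi
  refine ⟨fun x => (α (i x))⁻¹ • x, fun x y hxy => ?_, fun x => ⟨i x, hi x, rfl⟩⟩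
  have hxy' : (α (i x))⁻¹ • x = (α (i y))⁻¹ • y := hxy
  have hi_eq : i x = i y := by
    by_contra hne
    exact Set.disjoint_left.1 (hA _ _ hne) (hi x) (hxy' ▸ hi y)
  exact smul_left_cancel _ (hi_eq ▸ hxy')

open scoped Classical in
theorem IsParadoxicalDecomposition.exists_two_mul_card_le {n m : ℕ} {A : Fin n → Set X}
    {B : Fin m → Set X} {α : Fin n → Γ} {β : Fin m → Γ}
    (h : IsParadoxicalDecomposition A B α β) :
    ∃ S : Finset Γ, ∀ F : Finset X, 2 * #F ≤ #(S • F) := by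
  obtain ⟨hA, hB, hAB, -, -, -, hα, hβ⟩ := h
  obtain ⟨f, hf, hfA⟩ := exists_injective_of_iUnion_smul_eq_univ hA hα
  obtain ⟨g, hg, hgB⟩ := exists_injective_of_iUnion_smul_eq_univ hB hβ
  refine ⟨Finset.univ.image (fun i => (α i)⁻¹) ∪ Finset.univ.image (fun j => (β j)⁻¹),
    fun F => ?_⟩
  have hdisj : Disjoint (F.image f) (F.image g) := by
    simp only [Finset.disjoint_left, Finset.mem_image]
    rintro _ ⟨x, -, rfl⟩ ⟨y, -, hyx⟩
    obtain ⟨i, hi, -⟩ := hfA x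
    obtain ⟨j, hj, -⟩ := hgB y
    exact Set.disjoint_left.1 (hAB i j) hi (hyx ▸ hj)
  calc 2 * #F = #(F.image f ∪ F.image g) := by
        rw [Finset.card_union_of_disjoint hdisj, Finset.card_image_of_injective _ hf,
          Finset.card_image_of_injective _ hg, two_mul]
    _ ≤ _ := Finset.card_le_card ?_
  rw [Finset.union_smul]
  refine Finset.union_subset_union (Finset.image_subset_iff.2 fun x hx => ?_)
    (Finset.image_subset_iff.2 fun x hx => ?_)
  · obtain ⟨i, -, hi⟩ := hfA x
    exact hi ▸ Finset.smul_mem_smul (Finset.mem_image_of_mem _ (Finset.mem_univ i)) hx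
  · obtain ⟨j, -, hj⟩ := hgB x
    exact hj ▸ Finset.smul_mem_smul (Finset.mem_image_of_mem _ (Finset.mem_univ j)) hx

theorem pow_mul_card_le_card_pow_smul [DecidableEq Γ] [DecidableEq X] {S : Finset Γ} {m : ℕ}
    (hS : ∀ F : Finset X, m * #F ≤ #(S • F)) (k : ℕ) (F : Finset X) :
    m ^ k * #F ≤ #(S ^ k • F) := by
  induction k with
  | zero => simp
  | succ k ih =>
    calc m ^ (k + 1) * #F = m * (m ^ k * #F) := by ring
      _ ≤ m * #(S ^ k • F) := Nat.mul_le_mul_left m ih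
      _ ≤ #(S • S ^ k • F) := hS _
      _ = #(S ^ (k + 1) • F) := by rw [smul_smul, ← pow_succ']

open scoped Classical in
theorem mul_card_le_card_biUnion_targets {ι : Type*} [Finite ι] {S : Finset Γ} {m : ℕ}
    (hS : ∀ F : Finset X, m * Nat.card ι * #F ≤ #(S • F)) (F : Finset (X × ι)) :
    m * #F ≤ #(F.biUnion (targets fun _ => S)) := by
  have := Fintype.ofFinite ι
  have hF : F ⊆ F.image Prod.fst ×ˢ Finset.univ := fun p hp =>
    Finset.mem_product.2 ⟨Finset.mem_image_of_mem _ hp, Finset.mem_univ _⟩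
  have hsmul : S • F.image Prod.fst ⊆ F.biUnion (targets fun _ => S) := by
    refine Finset.smul_subset_iff.2 fun s hs x hx => ?_
    obtain ⟨p, hp, rfl⟩ := Finset.mem_image.1 hx
    exact Finset.mem_biUnion.2 ⟨p, hp, mem_targets.2 ⟨s, hs, rfl⟩⟩
  calc m * #F ≤ m * (#(F.image Prod.fst) * Nat.card ι) := by
        rw [Nat.card_eq_fintype_card, ← Finset.card_univ, ← Finset.card_product]
        exact Nat.mul_le_mul_left m (Finset.card_le_card hF)
    _ = m * Nat.card ι * #(F.image Prod.fst) := by ring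
    _ ≤ #(S • F.image Prod.fst) := hS _
    _ ≤ #(F.biUnion (targets fun _ => S)) := Finset.card_le_card hsmul

end Expansion

section FreeAction

open scoped MeasureTheory

variable {Γ X α : Type*} [Group Γ] [MulAction Γ X] [MeasurableSpace X] [MeasurableConstSMul Γ X]
  [Finite α] [Nonempty α]

open scoped Classical in
theorem exists_free_action_of_isSparse [Countable Γ] [MeasurableEq X] {S : Finset Γ}
    (hS : ∀ F : Finset X, 2 * Nat.card (α × Bool) * #F ≤ #(S • F))
    {K : ℕ → Set (X × (α × Bool))} (hK : ∀ n i, MeasurableSet {x | (x, i) ∈ K n})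
    (hsparse : ∀ n, IsSparse (insert 1 (S⁻¹ * S) ^ (2 * 2 ^ (n + 2))) (K n)) {B : Set X}
    (hB : MeasurableSet B) (hΓB : ∀ (γ : Γ) (x : X), γ • x ∈ B ↔ x ∈ B)
    (hBK : ∀ x ∈ B, ∀ i, ∃ n, (x, i) ∈ K n) :
    ∃ b : FreeGroup α →* Equiv.Perm X,
      (∀ w s, MeasurableSet s → MeasurableSet (B ∩ b w ⁻¹' s)) ∧ (∀ w ≠ 1, ∀ x, b w x ≠ x) ∧
      ∀ w, BoundedDisplacement Γ (b w) id := by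
  let _ := Encodable.ofCountable Γ
  obtain ⟨Φ, hinj, hΦ⟩ :=
    exists_injective_mem_refinement (mul_card_le_card_biUnion_targets hS) hsparse
  have hΦS : BoundedDisplacement Γ Φ Prod.fst :=
    ⟨S, fun p => (hΦ p).imp fun s hs => ⟨refinement_subset 0 p (hs.1 0), hs.2⟩⟩
  have hpiece (i : α × Bool) (γ : Γ) : MeasurableSet (B ∩ {x | Φ (x, i) = γ • x}) := by
    have heq : B ∩ {x | Φ (x, i) = γ • x} =
        B ∩ {x | (∃ n, (x, i) ∈ K n) ∧ Φ (x, i) = γ • x} := by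
      ext x
      exact and_congr_right fun hx => (and_iff_right (hBK x hx i)).symm
    exact heq ▸ hB.inter (measurableSet_eq_smul_of_mem_refinement hK hΦ i γ)
  have hΦm (i : α × Bool) :
      Measurable[traceMeasurableSpace B, traceMeasurableSpace B] fun x => Φ (x, i) :=
    measurable_traceMeasurableSpace_of_pieces hB hΓB
      (fun x => (hΦ (x, i)).imp fun _ h => h.2) (hpiece i)
  obtain ⟨b, hb, hfree, hlip⟩ :=
    @exists_free_action_of_injective Γ X _ _ _ (traceMeasurableSpace B)
      (measurableConstSMul_traceMeasurableSpace hB hΓB) (measurableEq_traceMeasurableSpace B)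
      α _ _ Φ hΦm hinj hΦS
  exact ⟨b, fun w s hs => (measurableSet_traceMeasurableSpace hB).1
    (hb w (le_traceMeasurableSpace B s hs)), hfree, hlip⟩

variable [TopologicalSpace X] [SecondCountableTopology X] [T0Space X] [BorelSpace X]

open scoped Classical in
theorem exists_residual_free_action_of_expansion [Countable Γ] {S : Finset Γ}
    (hS : ∀ F : Finset X, 2 * Nat.card (α × Bool) * #F ≤ #(S • F)) :
    ∃ (B : Set X) (b : FreeGroup α →* Equiv.Perm X), MeasurableSet B ∧ B ∈ residual X ∧
      (∀ w s, MeasurableSet s → MeasurableSet (B ∩ b w ⁻¹' s)) ∧ (∀ w ≠ 1, ∀ x, b w x ≠ x) ∧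
      (∀ w, BoundedDisplacement Γ (b w) id) ∧ ∀ w x, x ∈ B ↔ b w x ∈ B := by
  obtain ⟨K, hK, hsparse, hres⟩ := exists_isSparse_forall_exists_mem_residual (Γ := Γ) (X := X)
    (ι := α × Bool) fun n => insert 1 (S⁻¹ * S) ^ (2 * 2 ^ (n + 2))
  set B := {x : X | ∀ (γ : Γ) i, ∃ n, (γ • x, i) ∈ K n}
  have hB : MeasurableSet B := measurableSet_setOfPred.2 <| .forall fun γ => .forall fun i =>
    .exists fun n => measurableSet_setOfPred.1 (measurable_const_smul γ (hK n i))
  have hΓB (γ : Γ) (x : X) : γ • x ∈ B ↔ x ∈ B := by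
    refine ⟨fun h δ => ?_, fun h δ => ?_⟩
    · simpa [smul_smul] using h (δ * γ⁻¹)
    · simpa [smul_smul] using h (δ * γ)
  have := measurableEq_of_countablySeparated X
  obtain ⟨b, hb, hfree, hlip⟩ := exists_free_action_of_isSparse hS hK hsparse hB hΓB
    fun x hx => by simpa using hx 1
  refine ⟨B, b, hB, hres, hb, hfree, hlip, fun w x => ?_⟩
  obtain ⟨T, hT⟩ := hlip w
  obtain ⟨γ, -, hγ⟩ := hT x
  rw [hγ]
  exact (hΓB γ x).symm

open scoped Classical in
/-- The elements expanding finite sets generate a countable group. -/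
theorem exists_residual_free_action_of_two_mul_card_le {S : Finset Γ}
    (hS : ∀ F : Finset X, 2 * #F ≤ #(S • F)) :
    ∃ (B : Set X) (b : FreeGroup α →* Equiv.Perm X), MeasurableSet B ∧ B ∈ residual X ∧
      (∀ w s, MeasurableSet s → MeasurableSet (B ∩ b w ⁻¹' s)) ∧ (∀ w ≠ 1, ∀ x, b w x ≠ x) ∧
      (∀ w, BoundedDisplacement Γ (b w) id) ∧ ∀ w x, x ∈ B ↔ b w x ∈ B := by
  let H := Subgroup.closure (S : Set Γ)
  have : Countable H := by
    rw [show H = _ from FreeGroup.closure_eq_range (S : Set Γ)]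
    exact (Set.countable_range _).to_subtype
  let T : Finset H := S.subtype (· ∈ H)
  have hT (F : Finset X) : 2 * #F ≤ #(T • F) := by
    refine (hS F).trans (Finset.card_le_card (Finset.smul_subset_iff.2 fun s hs x hx => ?_))
    exact Finset.smul_mem_smul (s := T) (a := ⟨s, Subgroup.subset_closure hs⟩)
      (Finset.mem_subtype.2 hs) hx
  obtain ⟨k, hk⟩ := pow_unbounded_of_one_lt (2 * Nat.card (α × Bool)) one_lt_two
  obtain ⟨B, b, hB, hres, hb, hfree, hlip, hinv⟩ :=
    exists_residual_free_action_of_expansion (Γ := H) (X := X) (α := α) (S := T ^ k) fun F =>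
      (Nat.mul_le_mul_right _ hk.le).trans (pow_mul_card_le_card_pow_smul hT k F)
  refine ⟨B, b, hB, hres, hb, hfree, fun w => ?_, hinv⟩
  obtain ⟨U, hU⟩ := hlip w
  refine ⟨U.image H.subtype, fun x => ?_⟩
  obtain ⟨γ, hγ, hx⟩ := hU x
  exact ⟨γ, Finset.mem_image_of_mem _ hγ, hx⟩

end FreeAction

theorem dynamical_vnd_strong_general {Γ X ι : Type*} [Group Γ] [TopologicalSpace X]
    [SecondCountableTopology X] [T0Space X] [MeasurableSpace X] [BorelSpace X] [MulAction Γ X]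
    [Finite ι] [Nonempty ι] (hBorelAction : ∀ γ : Γ, Measurable (fun x : X => γ • x))
    (hpara : ∃ (n m : ℕ) (A : Fin n → Set X) (B : Fin m → Set X) (α : Fin n → Γ)
      (β : Fin m → Γ), IsParadoxicalDecomposition A B α β) :
    ∃ (B : Set X) (b : FreeGroup ι →* Equiv.Perm X), MeasurableSet B ∧ B ∈ residual X ∧
      (∀ w, BaireMeasurableFun (b w)) ∧ (∀ w ≠ 1, ∀ x, b w x ≠ x) ∧
      (∀ w, BoundedDisplacement Γ (b w) id) ∧ (∀ w x, x ∈ B ↔ b w x ∈ B) ∧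
      ∀ w, Measurable (B.domRestrict (b w)) := by
  classical
  have : MeasurableConstSMul Γ X := ⟨hBorelAction⟩
  obtain ⟨n, m, A, A', β, β', h⟩ := hpara
  obtain ⟨S, hS⟩ := h.exists_two_mul_card_le
  obtain ⟨B, b, hB, hres, hb, hfree, hlip, hinv⟩ :=
    exists_residual_free_action_of_two_mul_card_le (α := ι) hS
  refine ⟨B, b, hB, hres, fun w s hs => ?_, hfree, hlip, hinv, fun w s hs => ?_⟩
  · refine (hb w s hs).baireMeasurableSet.congr ?_
    filter_upwards [hres] with x hx
    exact propext (and_iff_right hx)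
  · exact (measurableSet_traceMeasurableSpace hB).2 (hb w s hs)

/-- **Theorem (Marks–Unger).** If `a` is a paradoxical action of a group `Γ` on a Polish space
`X` by Borel automorphisms, then there is a comeager Borel set `B ⊆ X` and a free
`a`-Lipschitz action of `F₂` on `X` by Baire measurable automorphisms such that `B` is
invariant under the `F₂`-action and every element of `F₂` acts by a Borel automorphism on
`B`. -/
theorem dynamical_vnd_strong {Γ X : Type*} [Group Γ] [TopologicalSpace X] [PolishSpace X]
    [MeasurableSpace X] [BorelSpace X] [MulAction Γ X]
    (hBorelAction : ∀ γ : Γ, Measurable (fun x : X => γ • x))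
    (hpara : ∃ (n m : ℕ) (A : Fin n → Set X) (B : Fin m → Set X) (α : Fin n → Γ)
      (β : Fin m → Γ), IsParadoxicalDecomposition A B α β) :
    ∃ (B : Set X) (b : FreeGroup (Fin 2) →* Equiv.Perm X),
      MeasurableSet B ∧ B ∈ residual X ∧
      -- the action is by Baire measurable automorphisms
      (∀ w : FreeGroup (Fin 2), BaireMeasurableFun (⇑(b w))) ∧
      -- the action is free
      (∀ w : FreeGroup (Fin 2), w ≠ 1 → ∀ x : X, b w x ≠ x) ∧
      -- the action is `a`-Lipschitz
      (∀ w : FreeGroup (Fin 2), ∃ S : Finset Γ, ∀ x : X, ∃ γ ∈ S, b w x = γ • x) ∧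
      -- `B` is invariant under the `F₂`-action
      (∀ w : FreeGroup (Fin 2), ∀ x : X, x ∈ B ↔ b w x ∈ B) ∧
      -- every element of `F₂` acts by a Borel automorphism on `B`
      (∀ w : FreeGroup (Fin 2), Measurable (B.restrict (⇑(b w)))) := by
  exact dynamical_vnd_strong_general hBorelAction hpara
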